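/- arXiv:1612.00184 — 10 statements merged into one kernel-verified Lean document; each statement's English description precedes it below -/
import Mathlib

section
/- Let n ≥ 2 be an integer and λ a rational number. If (n+1) · binom(λ+n, n) is an integer, where binom(λ+n, n) denotes the generalized binomial coefficient (λ+n)(λ+n−1)⋯(λ+1)/n!, then λ is an integer. -/
/-!
Write `lam = a / b` in lowest terms. Clearing denominators in the hypothesis gives
`(n + 1) * ∏ (a + (n - i) * b) = m * n! * b ^ n` over `ℤ`. Every factor `a + (n - i) * b` is
coprime to `b`, so `b ^ n ∣ n + 1`. Since `n + 1 < 2 ^ n` for `n ≥ 2`, this forces `b = 1`.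
-/

/-- Generalized binomial coefficient `binom μ n = μ(μ−1)⋯(μ−n+1)/n!` for `μ : ℚ`. -/
def genBinom (μ : ℚ) (n : ℕ) : ℚ :=
  (∏ i ∈ Finset.range n, (μ - i)) / (n.factorial : ℚ)

theorem add_one_lt_two_pow (n : ℕ) (hn : 2 ≤ n) : n + 1 < 2 ^ n := by
  induction n, hn using Nat.le_induction with
  | base => norm_num
  | succ k hk ih => rw [pow_succ]; omega

theorem stmt_0 (n : ℕ) (hn : 2 ≤ n) (lam : ℚ)
    (h : ∃ m : ℤ, ((n : ℚ) + 1) * genBinom (lam + n) n = (m : ℚ)) :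
    ∃ m : ℤ, lam = (m : ℚ) := by
  obtain ⟨m, hm⟩ := h
  have hb : (lam.den : ℚ) ≠ 0 := by exact_mod_cast lam.den_nz
  have hprod : (∏ i ∈ Finset.range n, (lam + n - i)) * (lam.den : ℚ) ^ n
      = ((∏ i ∈ Finset.range n, (lam.num + ((n : ℤ) - i) * lam.den) : ℤ) : ℚ) := by
    have hpow : (lam.den : ℚ) ^ n = ∏ _i ∈ Finset.range n, (lam.den : ℚ) := by simp
    rw [hpow, ← Finset.prod_mul_distrib]
    push_cast
    refine Finset.prod_congr rfl fun i _ => ?_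
    rw [← Rat.mul_den_eq_num lam]
    ring
  have hint : ((n : ℤ) + 1) * ∏ i ∈ Finset.range n, (lam.num + ((n : ℤ) - i) * lam.den)
      = m * n.factorial * (lam.den : ℤ) ^ n := by
    have hf : (n.factorial : ℚ) ≠ 0 := by exact_mod_cast n.factorial_ne_zero
    rw [genBinom, ← mul_div_assoc, div_eq_iff hf] at hm
    have key : ((n : ℚ) + 1) *
        ((∏ i ∈ Finset.range n, (lam.num + ((n : ℤ) - i) * lam.den) : ℤ) : ℚ)
        = m * n.factorial * (lam.den : ℚ) ^ n := by
      rw [← hprod, ← mul_assoc, hm]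
    exact_mod_cast key
  have hcop : IsCoprime ((lam.den : ℤ) ^ n)
      (∏ i ∈ Finset.range n, (lam.num + ((n : ℤ) - i) * lam.den)) := by
    refine IsCoprime.pow_left (IsCoprime.prod_right fun i _ => ?_)
    rw [IsCoprime.add_mul_right_right_iff]
    exact lam.isCoprime_num_den.symm
  have hdvd : (lam.den : ℤ) ^ n ∣ (n : ℤ) + 1 :=
    hcop.dvd_of_dvd_mul_right (hint ▸ dvd_mul_left _ _)
  have hle : lam.den ^ n ≤ n + 1 := Nat.le_of_dvd (by omega) (by exact_mod_cast hdvd)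
  have hlt : lam.den < 2 :=
    lt_of_pow_lt_pow_left₀ n (by norm_num) (hle.trans_lt (add_one_lt_two_pow n hn))
  have hone : lam.den = 1 := by have := lam.den_pos; omega
  exact ⟨lam.num, ((Rat.den_eq_one_iff lam).mp hone).symm⟩
end

section
/- Let n ≥ 1 be an integer and λ a rational number. If binom(λ+n+1, n) is an integer, where binom(λ+n+1, n) denotes the generalized binomial coefficient (λ+n+1)(λ+n)⋯(λ+2)/n!, then λ is an integer. -/
theorem stmt_1 (n : ℕ) (hn : 1 ≤ n) (lam : ℚ)
    (h : ∃ m : ℤ, genBinom (lam + n + 1) n = (m : ℚ)) :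
    ∃ m : ℤ, lam = (m : ℚ) := by
  obtain ⟨m, hm⟩ := h
  have hf : (n.factorial : ℚ) ≠ 0 := by exact_mod_cast n.factorial_ne_zero
  rw [genBinom, div_eq_iff hf] at hm
  set p : Polynomial ℤ :=
    ∏ i ∈ Finset.range n, (Polynomial.X - Polynomial.C (i : ℤ)) with hp
  have hdeg : p.natDegree ≠ 0 := by
    rw [hp, Polynomial.natDegree_finsetProd_X_sub_C_eq_card, Finset.card_range]
    omega
  have hval : Polynomial.aeval (lam + n + 1) p = algebraMap ℤ ℚ (m * n.factorial) := by
    simpa [hp, map_prod] using hm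
  have hint : IsIntegral ℤ (lam + n + 1) :=
    IsIntegral.of_aeval_monic (Polynomial.monic_prod_X_sub_C _ _) hdeg
      (hval ▸ isIntegral_algebraMap)
  obtain ⟨k, hk⟩ := IsIntegrallyClosed.isIntegral_iff.mp hint
  refine ⟨k - n - 1, ?_⟩
  have hk' : (k : ℚ) = lam + n + 1 := by simpa using hk
  push_cast
  linarith
end

section
/- Let m and K be positive integers and let {q_α^s : 1 ≤ α ≤ K, 2 ≤ s ≤ m} be a family of non-negative real numbers. Consider the polynomial in the variables x_1, …, x_m given by f(x_1,…,x_m) = (−x_1 + Σ_{α=1}^{K} Σ_{s=2}^{m} q_α^s x_s) · ∏_{α=1}^{K} (x_1 + Σ_{s=2}^{m} q_α^s x_s) + x_1^{K+1}. Then every coefficient of f (as a real multivariate polynomial) is non-negative. -/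
/-!
Write `x = x₁` and `L α = ∑_{s ≠ 1} q_α^s x_s`. Polynomials with non-negative coefficients form a
subsemiring `P` containing `x` and every `L α`, so it suffices to prove
`(-x + ∑ L α) * ∏ (x + L α) + x ^ (K + 1) ∈ P` for any subsemiring `P` of a commutative ring
(`neg_add_sum_mul_prod_add_pow_mem`). This goes by induction on the set of indices. With
`g = (-x + ∑_S L) * ∏_S (x + L) + x ^ (n + 1)`, where `n = |S|`, the expression for `S ∪ {a}` is
`g * (x + L a) + L a * (∏_{S ∪ {a}} (x + L) - x ^ (n + 1))`, and the last factor lies in `P`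
because `x ^ (n + 1)` is one of the terms of the expanded product (`prod_sub_pow_mem`).
-/

open MvPolynomial

/-- The subsemiring of real polynomials all of whose coefficients are non-negative. -/
def nonnegCoeff (σ : Type*) : Subsemiring (MvPolynomial σ ℝ) where
  carrier := {p | ∀ d, 0 ≤ p.coeff d}
  mul_mem' {a b} ha hb d := by
    classical
    rw [coeff_mul]
    exact Finset.sum_nonneg fun i _ => mul_nonneg (ha _) (hb _)
  one_mem' d := by
    classical
    rw [coeff_one]
    split_ifs <;> norm_num
  add_mem' {a b} ha hb d := by
    rw [coeff_add]
    exact add_nonneg (ha d) (hb d)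
  zero_mem' d := by simp

lemma X_mem_nonnegCoeff {σ : Type*} (i : σ) : X i ∈ nonnegCoeff σ := fun d => by
  classical
  rw [coeff_X]
  split_ifs <;> norm_num

lemma C_mem_nonnegCoeff {σ : Type*} {r : ℝ} (hr : 0 ≤ r) : C r ∈ nonnegCoeff σ := fun d => by
  classical
  rw [coeff_C]
  split_ifs <;> simp [hr]

lemma prod_sub_pow_mem {R ι : Type*} [CommRing R] (P : Subsemiring R) {x : R} (hx : x ∈ P)
    {L : ι → R} (hL : ∀ i, L i ∈ P) (S : Finset ι) :
    ∏ i ∈ S, (x + L i) - x ^ S.card ∈ P := by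
  classical
  induction S using Finset.induction_on with
  | empty => simp
  | insert a S ha ih =>
    rw [Finset.prod_insert ha, Finset.card_insert_of_notMem ha]
    have h : (x + L a) * ∏ i ∈ S, (x + L i) - x ^ (S.card + 1) =
        (x + L a) * (∏ i ∈ S, (x + L i) - x ^ S.card) + L a * x ^ S.card := by ring
    rw [h]
    exact P.add_mem (P.mul_mem (P.add_mem hx (hL a)) ih) (P.mul_mem (hL a) (P.pow_mem hx _))

lemma neg_add_sum_mul_prod_add_pow_mem {R ι : Type*} [CommRing R] (P : Subsemiring R) {x : R}
    (hx : x ∈ P) {L : ι → R} (hL : ∀ i, L i ∈ P) (S : Finset ι) :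
    (-x + ∑ i ∈ S, L i) * ∏ i ∈ S, (x + L i) + x ^ (S.card + 1) ∈ P := by
  classical
  induction S using Finset.induction_on with
  | empty => simp
  | insert a S ha ih =>
    have hp := prod_sub_pow_mem P hx hL (insert a S)
    rw [Finset.prod_insert ha, Finset.card_insert_of_notMem ha] at hp ⊢
    rw [Finset.sum_insert ha]
    have h : (-x + (L a + ∑ i ∈ S, L i)) * ((x + L a) * ∏ i ∈ S, (x + L i)) +
          x ^ (S.card + 1 + 1) =
        ((-x + ∑ i ∈ S, L i) * ∏ i ∈ S, (x + L i) + x ^ (S.card + 1)) * (x + L a) +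
          L a * ((x + L a) * ∏ i ∈ S, (x + L i) - x ^ (S.card + 1)) := by ring
    rw [h]
    exact P.add_mem (P.mul_mem ih (P.add_mem hx (hL a))) (P.mul_mem (hL a) hp)

/-- the polynomial
`f = (−x₁ + Σ_{α} Σ_{s≠1} q_α^s x_s) · ∏_{α} (x₁ + Σ_{s≠1} q_α^s x_s) + x₁^{K+1}`
(variables indexed by `Fin m`, with `x₁ = X 0`) has non-negative coefficients,
whenever all the `q_α^s` are non-negative. -/
theorem stmt_3 (m K : ℕ) (hm : 0 < m) (hK : 0 < K)
    (q : Fin K → Fin m → ℝ) (hq : ∀ α s, 0 ≤ q α s)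
    (f : MvPolynomial (Fin m) ℝ)
    (hf : f =
      (-(X (⟨0, hm⟩ : Fin m)) +
          ∑ α : Fin K, ∑ s ∈ Finset.univ.erase (⟨0, hm⟩ : Fin m), C (q α s) * X s) *
        (∏ α : Fin K,
          (X (⟨0, hm⟩ : Fin m) +
            ∑ s ∈ Finset.univ.erase (⟨0, hm⟩ : Fin m), C (q α s) * X s)) +
      X (⟨0, hm⟩ : Fin m) ^ (K + 1)) :
    ∀ d : Fin m →₀ ℕ, 0 ≤ f.coeff d := by
  have h := neg_add_sum_mul_prod_add_pow_mem (nonnegCoeff (Fin m)) (X_mem_nonnegCoeff ⟨0, hm⟩)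
    (L := fun α : Fin K => ∑ s ∈ Finset.univ.erase (⟨0, hm⟩ : Fin m), C (q α s) * X s)
    (fun α => Subsemiring.sum_mem _ fun s _ =>
      Subsemiring.mul_mem _ (C_mem_nonnegCoeff (hq α s)) (X_mem_nonnegCoeff s))
    Finset.univ
  rw [Finset.card_univ, Fintype.card_fin, ← hf] at h
  exact h
end

section
/- Let K ≥ 1 and let q_1, …, q_K be positive integers. Define B = (5/2)·(Σ_{α=1}^{K} (q_α² − q_α))² + Σ_{α=1}^{K} (q_α − q_α⁴). Then B ≥ 0 if and only if it is NOT the case that there is exactly one index α₀ with q_{α₀} = 2 while q_α = 1 for all α ≠ α₀. In the exceptional case B = −4. -/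
/-!
Write `x α = q α ^ 2 - q α ≥ 0` and `S = ∑ α, x α`. Then `q ^ 4 - q = x * (q ^ 2 + q + 1)`, so `0 ≤ B`
follows by summation from the termwise bound `q α ^ 4 - q α ≤ (5 / 2) * x α * S`. That bound is
trivial if `q α = 1`; it follows from `x α ≤ S` if `q α ≥ 3`, because then
`q ^ 2 + q + 1 ≤ (5 / 2) * x`; and if `q α = 2` it needs only `S ≥ 14 / 5`, which holds as soon as a
second index has `q β ≥ 2`, since then `S ≥ 2 + 2`. The one remaining configuration, a single `2`
among ones, gives `B = (5 / 2) * 2 ^ 2 - 14 = -4`.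
-/

theorem stmt_4 (K : ℕ) (hK : 1 ≤ K) (q : Fin K → ℕ) (hq : ∀ α, 0 < q α)
    (B : ℚ)
    (hB : B = (5 / 2) * (∑ α, ((q α : ℚ) ^ 2 - (q α : ℚ))) ^ 2 +
      ∑ α, ((q α : ℚ) - (q α : ℚ) ^ 4)) :
    (0 ≤ B ↔ ¬ ∃ α₀, q α₀ = 2 ∧ ∀ α, α ≠ α₀ → q α = 1) ∧
    ((∃ α₀, q α₀ = 2 ∧ ∀ α, α ≠ α₀ → q α = 1) → B = -4) := by
  have hexc : (∃ α₀, q α₀ = 2 ∧ ∀ α, α ≠ α₀ → q α = 1) → B = -4 := by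
    rintro ⟨a, ha, h⟩
    rw [hB, Finset.sum_eq_single a, Finset.sum_eq_single a, ha]
    · norm_num
    all_goals simp +contextual [h]
  refine ⟨⟨fun h0 he => ?_, fun hne => ?_⟩, hexc⟩
  · linarith [hexc he]
  have hx : ∀ α, 0 ≤ (q α : ℚ) ^ 2 - (q α : ℚ) := fun α => by
    have : (1 : ℚ) ≤ q α := by exact_mod_cast hq α
    nlinarith
  have hxS : ∀ α, (q α : ℚ) ^ 2 - (q α : ℚ) ≤ ∑ β, ((q β : ℚ) ^ 2 - (q β : ℚ)) := fun α =>
    Finset.single_le_sum (f := fun β => (q β : ℚ) ^ 2 - (q β : ℚ))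
      (fun β _ => hx β) (Finset.mem_univ α)
  have hpair : ∀ α β, β ≠ α → ((q α : ℚ) ^ 2 - (q α : ℚ)) + ((q β : ℚ) ^ 2 - (q β : ℚ)) ≤
      ∑ γ, ((q γ : ℚ) ^ 2 - (q γ : ℚ)) := fun α β hne => by
    rw [← Finset.sum_pair (f := fun γ => (q γ : ℚ) ^ 2 - (q γ : ℚ)) hne.symm]
    exact Finset.sum_le_sum_of_subset_of_nonneg (Finset.subset_univ _) (fun γ _ _ => hx γ)
  set S : ℚ := ∑ α, ((q α : ℚ) ^ 2 - (q α : ℚ)) with hS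
  have hterm : ∀ α, -((5 / 2) * S * ((q α : ℚ) ^ 2 - (q α : ℚ))) ≤
      (q α : ℚ) - (q α : ℚ) ^ 4 := fun α => by
    have hpos := hq α
    obtain h1 | h2 | h3 : q α = 1 ∨ q α = 2 ∨ 3 ≤ q α := by omega
    · simp [h1]
    · obtain ⟨β, hβα, hβ⟩ : ∃ β, β ≠ α ∧ q β ≠ 1 := by
        by_contra! hcon
        exact hne ⟨α, h2, hcon⟩
      have hβ2 : (2 : ℚ) ≤ q β := by
        have := hq β
        exact_mod_cast (by omega : 2 ≤ q β)
      have hp := hpair α β hβα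
      rw [h2] at hp ⊢
      push_cast at hp ⊢
      nlinarith
    · have h3' : (3 : ℚ) ≤ q α := by exact_mod_cast h3
      have hle : (q α : ℚ) ^ 2 + q α + 1 ≤ (5 / 2) * S := by nlinarith [hxS α]
      have := mul_le_mul_of_nonneg_right hle (hx α)
      linear_combination this
  have hsum := Finset.sum_le_sum (fun α (_ : α ∈ Finset.univ) => hterm α)
  rw [Finset.sum_neg_distrib, ← Finset.mul_sum, ← hS] at hsum
  rw [hB]
  linear_combination hsum
end

section
/- Let K ≥ 1 and let q_1^r, …, q_K^r and q_1^s, …, q_K^s be positive integers. Define B = 10·(Σ_{α=1}^{K} ((q_α^r)² − q_α^r))·(Σ_{α=1}^{K} q_α^r q_α^s) − 4·Σ_{α=1}^{K} (q_α^r)³ q_α^s. Then B ≥ 0 if and only if there exists an index α with q_α^r ≥ 2 (equivalently, B < 0 exactly when q_α^r = 1 for all α). -/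
/-!
Write `S = ∑ (q² - q)`, where `q = qr α`. If some `q ≥ 2`, then `4 q² ≤ 10 S` for every `α`: for
`q = 1` because `S ≥ 2`, and for `q ≥ 2` because `S ≥ q² - q` and `6 q² ≥ 10 q`. Multiplying by
`qr α * qs α` and summing gives `B ≥ 0`. If all `qr α = 1`, then `S = 0` and `B = -4 ∑ qs α < 0`.
-/

theorem stmt_5 (K : ℕ) (hK : 1 ≤ K) (qr qs : Fin K → ℕ)
    (hqr : ∀ α, 0 < qr α) (hqs : ∀ α, 0 < qs α)
    (B : ℤ)
    (hB : B = 10 * (∑ α, ((qr α : ℤ) ^ 2 - (qr α : ℤ))) * (∑ α, (qr α : ℤ) * (qs α : ℤ)) -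
      4 * ∑ α, (qr α : ℤ) ^ 3 * (qs α : ℤ)) :
    0 ≤ B ↔ ∃ α, 2 ≤ qr α := by
  constructor
  · intro h
    by_contra! hlt
    have h1 : ∀ α, qr α = 1 := fun α => by
      have := hqr α
      have := hlt α
      omega
    have hpos : 0 < ∑ α, (qs α : ℤ) :=
      Finset.sum_pos (fun α _ => by exact_mod_cast hqs α) ⟨⟨0, hK⟩, Finset.mem_univ _⟩
    simp only [h1, Nat.cast_one, one_pow, sub_self, Finset.sum_const_zero, mul_zero, zero_mul,
      one_mul] at hB
    linarith
  · rintro ⟨β, hβ⟩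
    set S : ℤ := ∑ α, ((qr α : ℤ) ^ 2 - (qr α : ℤ)) with hS
    have hle : ∀ α, (qr α : ℤ) ^ 2 - qr α ≤ S := fun α =>
      Finset.single_le_sum (f := fun α => (qr α : ℤ) ^ 2 - qr α)
        (fun γ _ => by
          have : (1 : ℤ) ≤ qr γ := by exact_mod_cast hqr γ
          nlinarith) (Finset.mem_univ α)
    have hS2 : 2 ≤ S := by
      have hβ' : (2 : ℤ) ≤ qr β := by exact_mod_cast hβ
      nlinarith [hle β]
    have key : ∀ α, 4 * (qr α : ℤ) ^ 2 ≤ 10 * S := fun α => by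
      rcases (Nat.succ_le_of_lt (hqr α)).eq_or_lt with h | h
      · rw [← h]
        norm_num
        linarith
      · have h' : (2 : ℤ) ≤ qr α := by exact_mod_cast h
        nlinarith [hle α]
    rw [hB, sub_nonneg, Finset.mul_sum, Finset.mul_sum]
    refine Finset.sum_le_sum fun α _ => ?_
    have h0 : (0 : ℤ) ≤ (qr α : ℤ) * qs α := by positivity
    nlinarith [mul_le_mul_of_nonneg_right (key α) h0]
end

section
/- Let K ≥ 1 and let q_1^r, …, q_K^r and q_1^s, …, q_K^s be positive integers. Then 10·(Σ_{α=1}^{K} q_α^r q_α^s)² + 5·(Σ_{α=1}^{K} ((q_α^r)² − q_α^r))·(Σ_{α=1}^{K} ((q_α^s)² − q_α^s)) − 6·Σ_{α=1}^{K} (q_α^r q_α^s)² ≥ 0. -/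
theorem stmt_6 (K : ℕ) (hK : 1 ≤ K) (qr qs : Fin K → ℕ)
    (hqr : ∀ α, 0 < qr α) (hqs : ∀ α, 0 < qs α) :
    (0 : ℤ) ≤ 10 * (∑ α, (qr α : ℤ) * (qs α : ℤ)) ^ 2 +
      5 * (∑ α, ((qr α : ℤ) ^ 2 - (qr α : ℤ))) * (∑ α, ((qs α : ℤ) ^ 2 - (qs α : ℤ))) -
      6 * ∑ α, ((qr α : ℤ) * (qs α : ℤ)) ^ 2 := by
  -- The products `qr α * qs α` are nonnegative, so the square of their sum dominates the sum of
  -- their squares; the middle term is nonnegative because `n ≤ n ^ 2` for integers.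
  have hsq : ∑ α, ((qr α : ℤ) * (qs α : ℤ)) ^ 2 ≤ (∑ α, (qr α : ℤ) * (qs α : ℤ)) ^ 2 :=
    Finset.sum_sq_le_sq_sum_of_nonneg fun α _ => by positivity
  have hnonneg (q : Fin K → ℕ) : (0 : ℤ) ≤ ∑ α, ((q α : ℤ) ^ 2 - (q α : ℤ)) :=
    Finset.sum_nonneg fun α _ => sub_nonneg.2 (Int.le_self_sq _)
  have hmid := mul_nonneg (hnonneg qr) (hnonneg qs)
  have hpos := sq_nonneg (∑ α, (qr α : ℤ) * (qs α : ℤ))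
  linarith
end

section
/- Let K ≥ 1 and let q_1^r, …, q_K^r, q_1^s, …, q_K^s, and q_1^t, …, q_K^t be positive integers. Then 10·(Σ_{α=1}^{K} ((q_α^r)² − q_α^r))·(Σ_{α=1}^{K} q_α^s q_α^t) + 20·(Σ_{α=1}^{K} q_α^r q_α^s)·(Σ_{α=1}^{K} q_α^r q_α^t) − 12·Σ_{α=1}^{K} (q_α^r)² q_α^s q_α^t ≥ 0. -/
/-!
The first summand is a product of nonnegative sums, because `q ^ 2 - q ≥ 0` for integers `q ≥ 1`.
Expanding `(∑ qr qs) (∑ qr qt)` into a double sum of nonnegative terms, its diagonal part is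
`∑ qr ^ 2 qs qt`, so the second summand dominates the subtracted one since `20 ≥ 12`.
-/

theorem stmt_7 (K : ℕ) (hK : 1 ≤ K) (qr qs qt : Fin K → ℕ)
    (hqr : ∀ α, 0 < qr α) (hqs : ∀ α, 0 < qs α) (hqt : ∀ α, 0 < qt α) :
    (0 : ℤ) ≤ 10 * (∑ α, ((qr α : ℤ) ^ 2 - (qr α : ℤ))) * (∑ α, (qs α : ℤ) * (qt α : ℤ)) +
      20 * (∑ α, (qr α : ℤ) * (qs α : ℤ)) * (∑ α, (qr α : ℤ) * (qt α : ℤ)) -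
      12 * ∑ α, (qr α : ℤ) ^ 2 * (qs α : ℤ) * (qt α : ℤ) := by
  have hr : ∀ α, (1 : ℤ) ≤ qr α := fun α => by exact_mod_cast hqr α
  have h₁ : (0 : ℤ) ≤ ∑ α, ((qr α : ℤ) ^ 2 - (qr α : ℤ)) :=
    Finset.sum_nonneg fun α _ => by nlinarith [hr α]
  have h₂ : (0 : ℤ) ≤ ∑ α, (qs α : ℤ) * (qt α : ℤ) :=
    Finset.sum_nonneg fun α _ => by positivity
  -- The left side is the diagonal part of the double sum on the right.
  have h₃ : ∑ α, (qr α : ℤ) ^ 2 * (qs α : ℤ) * (qt α : ℤ) ≤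
      (∑ α, (qr α : ℤ) * (qs α : ℤ)) * (∑ α, (qr α : ℤ) * (qt α : ℤ)) := by
    rw [Finset.sum_mul]
    refine Finset.sum_le_sum fun α _ => ?_
    have h : (qr α : ℤ) * (qt α : ℤ) ≤ ∑ β, (qr β : ℤ) * (qt β : ℤ) :=
      Finset.single_le_sum (f := fun β => (qr β : ℤ) * (qt β : ℤ))
        (fun β _ => by positivity) (Finset.mem_univ α)
    calc (qr α : ℤ) ^ 2 * (qs α : ℤ) * (qt α : ℤ)
        = (qr α : ℤ) * (qs α : ℤ) * ((qr α : ℤ) * (qt α : ℤ)) := by ring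
      _ ≤ _ := mul_le_mul_of_nonneg_left h (by positivity)
  have h₄ : (0 : ℤ) ≤ ∑ α, (qr α : ℤ) ^ 2 * (qs α : ℤ) * (qt α : ℤ) :=
    Finset.sum_nonneg fun α _ => by positivity
  have h₅ := mul_nonneg h₁ h₂
  linarith
end

section
/- Let k ≥ 0 be an integer and let f be a real polynomial of degree 4k+4 satisfying f(−t) = f(t) identically (i.e., f is an even polynomial), with positive leading coefficient, such that f(i) = 0 for every integer i with 1 ≤ i ≤ 2k+1, and such that the coefficient of t^{4k+2} in f is ≥ 0. Then the constant term of f is negative, i.e., f(0) < 0. -/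
open Polynomial

/-!
An even polynomial is `f(t) = g(t²)`, and `g` has degree `2k+2` with the `2k+1` distinct positive
roots `1², …, (2k+1)²`. Hence `g = P · (a X + b)` with `P = ∏ (X - i²)` and `a > 0` the leading
coefficient of `f`. Comparing coefficients of `X^(2k+1)` gives `0 ≤ b - a ∑ i²`, so `b > 0`
(equivalently, the remaining root of `g` is negative), and `f(0) = b · ∏ (-i²)` is negative because
the product has an odd number of factors.
-/

lemma coeff_odd_of_even (f : ℝ[X]) (heven : ∀ t : ℝ, f.eval (-t) = f.eval t)
    (n : ℕ) (hn : Odd n) : f.coeff n = 0 := by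
  have h : f.comp (C (-1) * X) = f := by
    apply Polynomial.funext
    intro t
    simpa using heven t
  have h2 := congrArg (fun p => p.coeff n) h
  simp only [comp_C_mul_X_coeff, hn.neg_one_pow] at h2
  linarith

lemma expand_contract_of_even (f : ℝ[X]) (heven : ∀ t : ℝ, f.eval (-t) = f.eval t) :
    expand ℝ 2 (contract 2 f) = f := by
  ext n
  rw [coeff_expand (by norm_num), coeff_contract (by norm_num)]
  split_ifs with h
  · rw [Nat.div_mul_cancel h]
  · exact (coeff_odd_of_even f heven n (by
      rw [← Nat.not_even_iff_odd, even_iff_two_dvd]; exact h)).symm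

theorem stmt_11 (k : ℕ) (f : ℝ[X])
    (hdeg : f.natDegree = 4 * k + 4)
    (heven : ∀ t : ℝ, f.eval (-t) = f.eval t)
    (hlead : 0 < f.leadingCoeff)
    (hroots : ∀ i : ℕ, 1 ≤ i → i ≤ 2 * k + 1 → f.eval (i : ℝ) = 0)
    (hcoeff : 0 ≤ f.coeff (4 * k + 2)) :
    f.eval 0 < 0 := by
  obtain ⟨g, hg⟩ : ∃ g : ℝ[X], expand ℝ 2 g = f := ⟨_, expand_contract_of_even f heven⟩
  have hev : ∀ t, f.eval t = g.eval (t ^ 2) := by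
    intro t; rw [← hg, expand_eval]
  have hgdeg : g.natDegree = 2 * k + 2 := by
    have := natDegree_expand 2 g
    rw [hg] at this; omega
  have hco : ∀ n, f.coeff (n * 2) = g.coeff n := by
    intro n; rw [← hg, coeff_expand_mul (by norm_num)]
  have hg1 : 0 ≤ g.coeff (2 * k + 1) := by
    rw [← hco]; convert hcoeff using 2; ring
  have hg2 : 0 < g.coeff (2 * k + 2) := by
    rw [← hco]
    rw [leadingCoeff, hdeg] at hlead
    convert hlead using 2; ring
  set r : ℕ → ℝ := fun i => ((i : ℝ) + 1) ^ 2 with hr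
  have hrpos : ∀ i, 0 < r i := fun i => by positivity
  have hinj : Function.Injective r := by
    intro i j h
    have h' : (i : ℝ) + 1 = j + 1 := (sq_eq_sq₀ (by positivity) (by positivity)).1 h
    exact_mod_cast add_right_cancel h'
  set s := Finset.range (2 * k + 1) with hs
  set P : ℝ[X] := ∏ i ∈ s, (X - C (r i)) with hP
  have hdvd : P ∣ g := by
    refine Finset.prod_dvd_of_coprime
      (fun i _ j _ hij => pairwise_coprime_X_sub_C hinj hij) ?_
    intro i hi
    rw [dvd_iff_isRoot, IsRoot, hr]
    have := hroots (i + 1) (by omega) (by have := Finset.mem_range.1 hi; omega)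
    rw [hev] at this
    exact_mod_cast this
  obtain ⟨q, hq⟩ := hdvd
  have hPm : P.Monic := monic_prod_of_monic _ _ fun i _ => monic_X_sub_C _
  have hPd : P.natDegree = 2 * k + 1 := by
    rw [hP, natDegree_finsetProd_X_sub_C_eq_card, hs, Finset.card_range]
  have hq0 : q ≠ 0 := by
    rintro rfl
    simp [hq] at hg2
  have hqd : q.natDegree ≤ 1 := by
    have := hPm.natDegree_mul' hq0
    rw [← hq] at this; omega
  obtain ⟨a, b, rfl⟩ := exists_eq_X_add_C_of_natDegree_le_one hqd
  have hPn : P.coeff (2 * k + 1) = 1 := by rw [← hPd]; exact hPm.coeff_natDegree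
  have hPn1 : P.coeff (2 * k + 2) = 0 := coeff_eq_zero_of_natDegree_lt (by omega)
  have hPn2 : P.coeff (2 * k) = -∑ i ∈ s, r i := by
    rw [← prod_X_sub_C_nextCoeff, ← hP, nextCoeff_of_natDegree_pos (by omega), hPd]
    rfl
  have hmul : P * (C a * X + C b) = C a * (P * X) + C b * P := by ring
  rw [hmul] at hq
  rw [hq, coeff_add, coeff_C_mul, coeff_C_mul, coeff_mul_X, hPn, hPn2] at hg1
  rw [hq, coeff_add, coeff_C_mul, coeff_C_mul, coeff_mul_X, hPn, hPn1] at hg2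
  have hS : 0 < ∑ i ∈ s, r i := Finset.sum_pos (fun i _ => hrpos i) ⟨0, by simp [hs]⟩
  have hb : 0 < b := by nlinarith
  have hP0 : P.eval 0 < 0 := by
    have h1 : P.eval 0 = -∏ i ∈ s, r i := by
      simp only [hP, eval_prod, eval_sub, eval_X, eval_C, zero_sub]
      rw [Finset.prod_neg, hs, Finset.card_range, (odd_two_mul_add_one k).neg_one_pow]
      ring
    have h2 : 0 < ∏ i ∈ s, r i := Finset.prod_pos fun i _ => hrpos i
    linarith
  rw [hev, hq]
  simp only [eval_add, eval_mul, eval_C, eval_X, ne_eq, OfNat.ofNat_ne_zero, not_false_eq_true,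
    zero_pow, mul_zero, zero_add]
  nlinarith
end

section
/- Let n ≥ 1 be an integer, V a real vector space, T : V^{2n} → ℝ a symmetric multilinear map, q : V → ℝ a quadratic form with associated polar (bilinear) form B(x,y) = (q(x+y) − q(x) − q(y))/2, and c ∈ ℝ a constant such that T(α, α, …, α) = c·q(α)^n for all α ∈ V. If e, f ∈ V satisfy q(e) = q(f) = 1 and B(e, f) = 0, then T(e, …, e, f, f) (with e appearing 2n−2 times and f appearing 2 times) equals c/(2n−1). -/
/-!
Both sides of `T(α, …, α) = c * q(α) ^ n` are polynomials in `t` on the line `α = e + t • f`.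
Orthogonality gives `q(e + t • f) = 1 + t ^ 2`, so the right side is `c * (1 + t ^ 2) ^ n`, whose
`t ^ 2`-coefficient is `c * n`. By multilinearity the `t ^ 2`-coefficient on the left is the sum,
over the two-element sets of slots, of `T` evaluated at `f` in these slots and `e` elsewhere; by
symmetry each summand is the value sought, and there are `(2 * n).choose 2 = n * (2 * n - 1)` of
them. Equality at every real `t` forces equality of coefficients.
-/

/-- A symmetric function evaluated at a family taking only the values `f` and `e` depends only on
the number of slots holding `f`. -/
lemma symm_piecewise_eq {ι V : Type*} [Fintype ι] [DecidableEq ι] (T : (ι → V) → ℝ)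
    (hsymm : ∀ (v : ι → V) (σ : Equiv.Perm ι), T (v ∘ σ) = T v) (e f : V)
    {s s' : Finset ι} (h : s.card = s'.card) :
    T (s.piecewise (fun _ => f) (fun _ => e)) = T (s'.piecewise (fun _ => f) (fun _ => e)) := by
  classical
  let g : {x // x ∈ s} ≃ {x // x ∈ s'} := Finset.equivOfCardEq h
  rw [← hsymm (s'.piecewise (fun _ => f) (fun _ => e)) g.extendSubtype]
  congr 1
  ext i
  by_cases hi : i ∈ s
  · have := g.extendSubtype_mem i hi
    simp [hi, this]
  · have := g.extendSubtype_not_mem i hi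
    simp [hi, this]

lemma map_add_smul_eq_sum {ι V : Type*} [Fintype ι] [DecidableEq ι] [AddCommGroup V] [Module ℝ V]
    (T : MultilinearMap ℝ (fun _ : ι => V) ℝ) (e f : V) (t : ℝ) :
    T (fun _ => t • f + e) =
      ∑ s : Finset ι, T (s.piecewise (fun _ => f) (fun _ => e)) * t ^ s.card := by
  have h := T.map_add_univ (fun _ => t • f) (fun _ => e)
  refine h.trans (Finset.sum_congr rfl fun s _ => ?_)
  have h2 := T.map_piecewise_smul (fun _ => t) (s.piecewise (fun _ => f) (fun _ => e)) s
  rw [Finset.prod_const, smul_eq_mul, mul_comm] at h2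
  rw [← h2]
  congr 1
  ext i
  by_cases hi : i ∈ s <;> simp [hi]

theorem stmt_12 (n : ℕ) (hn : 1 ≤ n)
    (V : Type*) [AddCommGroup V] [Module ℝ V]
    (T : MultilinearMap ℝ (fun _ : Fin (2 * n) => V) ℝ)
    (hsymm : ∀ (v : Fin (2 * n) → V) (σ : Equiv.Perm (Fin (2 * n))), T (v ∘ σ) = T v)
    (q : QuadraticForm ℝ V) (c : ℝ)
    (hT : ∀ α : V, T (fun _ => α) = c * (q α) ^ n)
    (e f : V) (he : q e = 1) (hf : q f = 1)
    (horth : (q (e + f) - q e - q f) / 2 = 0) :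
    T (fun i => if (i : ℕ) < 2 * n - 2 then e else f) = c / (2 * n - 1) := by
  classical
  have hq : ∀ t : ℝ, q (t • f + e) = 1 + t ^ 2 := by
    intro t
    have hp : QuadraticMap.polar q f e = 0 := by
      rw [QuadraticMap.polar_comm]
      unfold QuadraticMap.polar
      linarith
    rw [QuadraticMap.map_add q, QuadraticMap.polar_smul_left, hp, QuadraticMap.map_smul, he, hf]
    simp only [smul_eq_mul]
    ring
  let s₀ : Finset (Fin (2 * n)) := {⟨2 * n - 2, by omega⟩, ⟨2 * n - 1, by omega⟩}
  have hs₀ : s₀.card = 2 := Finset.card_pair (by simp [Fin.ext_iff]; omega)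
  have hA : (fun i : Fin (2 * n) => if (i : ℕ) < 2 * n - 2 then e else f) =
      s₀.piecewise (fun _ => f) (fun _ => e) := by
    ext i
    have hi : i ∈ s₀ ↔ ¬ (i : ℕ) < 2 * n - 2 := by
      simp only [s₀, Finset.mem_insert, Finset.mem_singleton, Fin.ext_iff]
      omega
    by_cases h : (i : ℕ) < 2 * n - 2 <;> simp [Finset.piecewise, hi, h]
  rw [hA]
  set A := T (s₀.piecewise (fun _ => f) (fun _ => e)) with hAdef
  have hpoly : (∑ s : Finset (Fin (2 * n)),
      Polynomial.C (T (s.piecewise (fun _ => f) (fun _ => e))) * Polynomial.X ^ s.card) =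
      Polynomial.C c * Polynomial.expand ℝ 2 ((1 + Polynomial.X) ^ n) := by
    refine Polynomial.funext fun t => ?_
    have h := map_add_smul_eq_sum T e f t
    rw [hT, hq] at h
    simp [Polynomial.eval_finsetSum, ← h]
  have hcoeff := congrArg (fun p => Polynomial.coeff p 2) hpoly
  have hR : (Polynomial.expand ℝ 2 ((1 + Polynomial.X) ^ n)).coeff 2 = n := by
    have := Polynomial.coeff_expand_mul (R := ℝ) (p := 2) two_pos ((1 + Polynomial.X) ^ n) 1
    rw [one_mul] at this
    rw [this, Polynomial.coeff_one_add_X_pow, Nat.choose_one_right]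
  have hL : (∑ s : Finset (Fin (2 * n)), Polynomial.C (T (s.piecewise (fun _ => f) (fun _ => e)))
      * Polynomial.X ^ s.card).coeff 2 = ((2 * n).choose 2 : ℝ) * A := by
    rw [Polynomial.finsetSum_coeff]
    have h1 : ∀ s : Finset (Fin (2 * n)),
        (Polynomial.C (T (s.piecewise (fun _ => f) (fun _ => e))) * Polynomial.X ^ s.card).coeff 2
          = if s.card = 2 then A else 0 := by
      intro s
      rw [Polynomial.coeff_C_mul_X_pow]
      by_cases h : s.card = 2
      · rw [if_pos h.symm, if_pos h, hAdef]
        exact symm_piecewise_eq T hsymm e f (h.trans hs₀.symm)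
      · rw [if_neg (Ne.symm h), if_neg h]
    rw [Finset.sum_congr rfl fun s _ => h1 s, ← Finset.sum_filter, Finset.sum_const,
      Finset.univ_filter_card_eq, Finset.card_powersetCard, Finset.card_univ, Fintype.card_fin,
      nsmul_eq_mul]
  simp only [hL, Polynomial.coeff_C_mul, hR] at hcoeff
  rw [Nat.cast_choose_two] at hcoeff
  push_cast at hcoeff
  have hn' : (1 : ℝ) ≤ n := by exact_mod_cast hn
  rw [eq_div_iff (by linarith)]
  have hn0 : (n : ℝ) ≠ 0 := by linarith
  apply mul_left_cancel₀ hn0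
  linarith
end

section
/- Let n ≥ 2 be an integer, V a real vector space, T : V^{2n} → ℝ a symmetric multilinear map, q : V → ℝ a quadratic form with associated polar (bilinear) form B(x,y) = (q(x+y) − q(x) − q(y))/2, and c ∈ ℝ a constant such that T(α, α, …, α) = c·q(α)^n for all α ∈ V. If e, f, g ∈ V are pairwise orthogonal with respect to B and satisfy q(e) = q(f) = q(g) = 1, then T(e^{2n−4}, f^4) = 3c/((2n−1)(2n−3)) and T(e^{2n−4}, f^2, g^2) = c/((2n−1)(2n−3)), where e^{2n−4} means e repeated 2n−4 times, f^4 means f repeated 4 times, and f^2, g^2 mean f and g each repeated twice. -/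
/-!
For fixed `w`, the function `x ↦ T(w^{N-m}, (a + x b)^m)` is a polynomial in `x` whose coefficients
are `m.choose k * T(w^{N-m}, a^{m-k}, b^k)`: multilinearity expands it over subsets of the last
`m` slots, and symmetry makes each term depend only on the size of the subset (`expand_last`).

If `b` is orthogonal to the unit vector `e`, then `T((e + x b)^{2n}) = c (1 + q(b) x²)^n`; comparing
coefficients of `x⁴` gives `(2n).choose 4 * T(e^{2n-4}, b⁴) = c * n.choose 2 * q(b)²`, that is
`T(e^{2n-4}, b⁴) = K q(b)²` with `K = 3c/((2n-1)(2n-3))` (`four_last`). The case `b = f` is the first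
claim. For `b = f ± g` one has `q(b) = 2`; adding the two expansions of `T(e^{2n-4}, (f ± g)⁴)` cancels
the odd terms and gives `4K + 12 T(e^{2n-4}, f², g²) = 8K`, so `T(e^{2n-4}, f², g²) = K / 3`.
-/

/-- A symmetric multilinear map takes the same value on two arrangements of `b`, `a`, `w` in which
`b` fills equally large subsets of `t`, `a` fills the rest of `t`, and `w` fills the complement. -/
lemma eq_of_card_eq {N : ℕ} {V : Type*} [AddCommGroup V] [Module ℝ V]
    (T : MultilinearMap ℝ (fun _ : Fin N => V) ℝ)
    (hsymm : ∀ (v : Fin N → V) (σ : Equiv.Perm (Fin N)), T (v ∘ σ) = T v)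
    (w a b : V) (s s' t : Finset (Fin N)) (hs : s ⊆ t) (hs' : s' ⊆ t) (hc : s.card = s'.card) :
    T (fun i => if i ∈ s then b else if i ∈ t then a else w) =
      T (fun i => if i ∈ s' then b else if i ∈ t then a else w) := by
  classical
  let p : Finset (Fin N) → Fin N → Fin 3 := fun u i => if i ∈ u then 2 else if i ∈ t then 1 else 0
  have h2 : ∀ u : Finset (Fin N), Finset.univ.filter (fun i => p u i = 2) = u := by
    intro u; ext i; simp only [p, Finset.mem_filter, Finset.mem_univ, true_and]
    split_ifs <;> simp_all
  have h1 : ∀ u : Finset (Fin N), Finset.univ.filter (fun i => p u i = 1) = t \ u := by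
    intro u; ext i
    simp only [p, Finset.mem_filter, Finset.mem_univ, true_and, Finset.mem_sdiff]
    split_ifs <;> simp_all
  have h0 : ∀ u : Finset (Fin N), u ⊆ t → Finset.univ.filter (fun i => p u i = 0) = tᶜ := by
    intro u hu; ext i
    have := @hu i
    simp only [p, Finset.mem_filter, Finset.mem_univ, true_and, Finset.mem_compl]
    split_ifs <;> simp_all
  have hcard : ∀ j : Fin 3, Fintype.card {i // p s i = j} = Fintype.card {i // p s' i = j} := by
    intro j
    rw [Fintype.card_subtype, Fintype.card_subtype]
    fin_cases j
    · exact congrArg _ ((h0 s hs).trans (h0 s' hs').symm)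
    · refine (congrArg _ (h1 s)).trans (Eq.trans ?_ (congrArg _ (h1 s')).symm)
      rw [Finset.card_sdiff_of_subset hs, Finset.card_sdiff_of_subset hs', hc]
    · exact (congrArg _ (h2 s)).trans (hc.trans (congrArg _ (h2 s')).symm)
  let σ : Equiv.Perm (Fin N) := Equiv.ofFiberEquiv fun j => Fintype.equivOfCardEq (hcard j)
  have hσ : ∀ i, p s' (σ i) = p s i := fun i => Equiv.ofFiberEquiv_map _ i
  have hL : ∀ u : Finset (Fin N), (fun i => if i ∈ u then b else if i ∈ t then a else w) =
      fun i => (![w, a, b] : Fin 3 → V) (p u i) := by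
    intro u; funext i; simp only [p]; split_ifs <;> rfl
  rw [hL s, hL s', ← hsymm (fun i => (![w, a, b] : Fin 3 → V) (p s' i)) σ]
  congr 1
  funext i
  simp [hσ]

lemma card_last {N k : ℕ} (hk : k ≤ N) :
    (Finset.univ.filter (fun i : Fin N => N - k ≤ (i : ℕ))).card = k := by
  have h := Finset.card_filter_add_card_filter_not (s := (Finset.univ : Finset (Fin N)))
    (fun i : Fin N => (i : ℕ) < N - k)
  rw [Fin.card_filter_val_lt] at h
  simp only [not_lt, Finset.card_univ, Fintype.card_fin] at h
  omega

/-- Binomial expansion of `a + x • b` in the last `m` slots of a symmetric multilinear map. -/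
lemma expand_last {N m : ℕ} (hm : m ≤ N) {V : Type*} [AddCommGroup V] [Module ℝ V]
    (T : MultilinearMap ℝ (fun _ : Fin N => V) ℝ)
    (hsymm : ∀ (v : Fin N → V) (σ : Equiv.Perm (Fin N)), T (v ∘ σ) = T v)
    (w a b : V) (x : ℝ) :
    T (fun i => if (i : ℕ) < N - m then w else a + x • b) =
      ∑ k ∈ Finset.range (m + 1), (m.choose k : ℝ) * (x ^ k *
        T (fun i => if (i : ℕ) < N - m then w else if (i : ℕ) < N - k then a else b)) := by
  classical
  set t : Finset (Fin N) := Finset.univ.filter (fun i => N - m ≤ (i : ℕ)) with ht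
  have htc : t.card = m := card_last hm
  have hL : (fun i : Fin N => if (i : ℕ) < N - m then w else a + x • b) =
      t.piecewise ((fun _ => x • b) + t.piecewise (fun _ => a) (fun _ => w))
        (t.piecewise (fun _ => a) (fun _ => w)) := by
    funext i
    by_cases hi : (i : ℕ) < N - m
    · have : i ∉ t := by simp [ht]; omega
      simp [this, hi]
    · have : i ∈ t := by simp [ht]; omega
      simp [this, hi, add_comm]
  rw [hL, T.map_piecewise_add]
  have key : ∀ s ∈ t.powerset,
      T (s.piecewise (fun _ => x • b) (t.piecewise (fun _ => a) (fun _ => w))) =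
      (fun k => x ^ k *
        T (fun i => if (i : ℕ) < N - m then w else if (i : ℕ) < N - k then a else b)) s.card := by
    intro s hs
    rw [Finset.mem_powerset] at hs
    have hk : s.card ≤ m := htc ▸ Finset.card_le_card hs
    have e1 : s.piecewise (fun _ => x • b) (t.piecewise (fun _ => a) (fun _ => w)) =
        s.piecewise (fun i => (fun _ => x) i •
          (fun i => if i ∈ s then b else if i ∈ t then a else w) i)
          (fun i => if i ∈ s then b else if i ∈ t then a else w) := by
      funext i
      by_cases h1 : i ∈ s <;> by_cases h2 : i ∈ t <;> simp [h1, h2]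
    rw [e1, T.map_piecewise_smul, Finset.prod_const, smul_eq_mul]
    simp only
    congr 1
    rw [eq_of_card_eq T hsymm w a b s (Finset.univ.filter (fun i => N - s.card ≤ (i : ℕ))) t hs
      (by intro i; simp only [ht, Finset.mem_filter, Finset.mem_univ, true_and]; omega)
      (card_last (hk.trans hm)).symm]
    congr 1
    funext i
    simp only [ht, Finset.mem_filter, Finset.mem_univ, true_and]
    split_ifs <;> first | rfl | omega
  rw [Finset.sum_congr rfl key, Finset.sum_powerset_apply_card (fun k => x ^ k *
        T (fun i => if (i : ℕ) < N - m then w else if (i : ℕ) < N - k then a else b)), htc]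
  simp [nsmul_eq_mul]

lemma coeff_four (n : ℕ) (hn : 2 ≤ n) (r : ℝ) :
    ((Polynomial.C r * Polynomial.X ^ 2 + 1) ^ n : Polynomial ℝ).coeff 4 =
      r ^ 2 * (n.choose 2 : ℝ) := by
  rw [add_pow, Polynomial.finsetSum_coeff, Finset.sum_eq_single 2]
  · rw [one_pow, mul_one, mul_pow, ← pow_mul, ← Polynomial.C_pow, Polynomial.coeff_mul_natCast,
      Polynomial.coeff_C_mul, Polynomial.coeff_X_pow, if_pos rfl, mul_one]
  · intro j _ hj
    rw [one_pow, mul_one, mul_pow, ← pow_mul, ← Polynomial.C_pow, Polynomial.coeff_mul_natCast,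
      Polynomial.coeff_C_mul, Polynomial.coeff_X_pow, if_neg (by omega)]
    simp
  · intro h
    exact absurd (Finset.mem_range.2 (by omega)) h

/-- For `b` orthogonal to the unit vector `e`, comparison of the coefficients of `x⁴` in
`T((e + x b)^{2n}) = c (1 + q(b) x²)^n` determines `T(e^{2n-4}, b⁴)`. -/
lemma four_last (n : ℕ) (hn : 2 ≤ n)
    {V : Type*} [AddCommGroup V] [Module ℝ V]
    (T : MultilinearMap ℝ (fun _ : Fin (2 * n) => V) ℝ)
    (hsymm : ∀ (v : Fin (2 * n) → V) (σ : Equiv.Perm (Fin (2 * n))), T (v ∘ σ) = T v)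
    (q : QuadraticForm ℝ V) (c : ℝ)
    (hT : ∀ α : V, T (fun _ => α) = c * (q α) ^ n)
    (e b : V) (he : q e = 1) (heb : QuadraticMap.polar q e b = 0) :
    T (fun i => if (i : ℕ) < 2 * n - 4 then e else b) =
      3 * c / ((2 * n - 1) * (2 * n - 3)) * q b ^ 2 := by
  let h : ℕ → ℝ := fun k => T (fun i => if (i : ℕ) < 2 * n - k then e else b)
  let P : Polynomial ℝ := ∑ k ∈ Finset.range (2 * n + 1),
    Polynomial.C (((2 * n).choose k : ℝ) * h k) * Polynomial.X ^ k
  have hP : P = Polynomial.C c * (Polynomial.C (q b) * Polynomial.X ^ 2 + 1) ^ n := by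
    apply Polynomial.funext
    intro x
    have hq : q (e + x • b) = q b * x ^ 2 + 1 := by
      rw [QuadraticMap.map_add q, QuadraticMap.polar_smul_right, heb, QuadraticMap.map_smul, he]
      simp only [smul_eq_mul]; ring
    have h1 := expand_last (le_refl (2 * n)) T hsymm e e b x
    simp only [Nat.sub_self, not_lt_zero, if_false] at h1
    rw [hT, hq] at h1
    simp only [P, Polynomial.eval_finsetSum, Polynomial.eval_mul, Polynomial.eval_C,
      Polynomial.eval_pow, Polynomial.eval_X, Polynomial.eval_add, Polynomial.eval_one]
    rw [h1]
    refine Finset.sum_congr rfl fun k _ => ?_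
    simp only [h]; ring
  have hc := congrArg (fun p => Polynomial.coeff p 4) hP
  simp only [Polynomial.coeff_C_mul, coeff_four n hn, P, Polynomial.finsetSum_coeff,
    Polynomial.coeff_X_pow, mul_ite, mul_one, mul_zero] at hc
  rw [Finset.sum_ite_eq, if_pos (Finset.mem_range.2 (by omega))] at hc
  change h 4 = _
  obtain ⟨m, rfl⟩ := Nat.exists_eq_add_of_le' hn
  have c4 : (((2 * (m + 2)).choose 4 : ℕ) : ℝ) * 24 =
      (2 * m + 4) * (2 * m + 3) * (2 * m + 2) * (2 * m + 1) := by
    have := Nat.descFactorial_eq_factorial_mul_choose (2 * (m + 2)) 4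
    rw [show 2 * (m + 2) = 2 * m + 4 by ring] at this ⊢
    simp only [Nat.succ_descFactorial_succ, Nat.descFactorial_zero, Nat.factorial] at this
    have h' := congrArg (Nat.cast : ℕ → ℝ) this
    push_cast at h'
    linarith
  rw [Nat.cast_choose_two] at hc
  push_cast at hc ⊢
  have hm : (0 : ℝ) ≤ m := Nat.cast_nonneg m
  have d1 : (2 * ((m : ℝ) + 2) - 1) ≠ 0 := by linarith
  have d2 : (2 * ((m : ℝ) + 2) - 3) ≠ 0 := by linarith
  have d3 : ((m : ℝ) + 2) * (m + 1) ≠ 0 := by positivity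
  rw [div_mul_eq_mul_div, eq_div_iff (mul_ne_zero d1 d2)]
  apply mul_left_cancel₀ d3
  linear_combination 6 * hc - (h 4) / 4 * c4

theorem stmt_13 (n : ℕ) (hn : 2 ≤ n)
    (V : Type*) [AddCommGroup V] [Module ℝ V]
    (T : MultilinearMap ℝ (fun _ : Fin (2 * n) => V) ℝ)
    (hsymm : ∀ (v : Fin (2 * n) → V) (σ : Equiv.Perm (Fin (2 * n))), T (v ∘ σ) = T v)
    (q : QuadraticForm ℝ V) (c : ℝ)
    (hT : ∀ α : V, T (fun _ => α) = c * (q α) ^ n)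
    (e f g : V) (he : q e = 1) (hf : q f = 1) (hg : q g = 1)
    (hef : (q (e + f) - q e - q f) / 2 = 0)
    (heg : (q (e + g) - q e - q g) / 2 = 0)
    (hfg : (q (f + g) - q f - q g) / 2 = 0) :
    T (fun i => if (i : ℕ) < 2 * n - 4 then e else f) =
      3 * c / ((2 * n - 1) * (2 * n - 3)) ∧
    T (fun i => if (i : ℕ) < 2 * n - 4 then e else if (i : ℕ) < 2 * n - 2 then f else g) =
      c / ((2 * n - 1) * (2 * n - 3)) := by
  have pef : QuadraticMap.polar q e f = 0 := by unfold QuadraticMap.polar; linarith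
  have peg : QuadraticMap.polar q e g = 0 := by unfold QuadraticMap.polar; linarith
  have pfg : QuadraticMap.polar q f g = 0 := by unfold QuadraticMap.polar; linarith
  have hF := four_last n hn T hsymm q c hT e f he pef
  have hG := four_last n hn T hsymm q c hT e g he peg
  have hX : ∀ x : ℝ, T (fun i => if (i : ℕ) < 2 * n - 4 then e else f + x • g) =
      3 * c / ((2 * n - 1) * (2 * n - 3)) * (1 + x ^ 2) ^ 2 := by
    intro x
    rw [four_last n hn T hsymm q c hT e (f + x • g) he (by
      rw [QuadraticMap.polar_add_right, QuadraticMap.polar_smul_right, pef, peg]; simp)]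
    rw [QuadraticMap.map_add q, QuadraticMap.polar_smul_right, pfg, QuadraticMap.map_smul, hf, hg]
    simp only [smul_eq_mul]; ring
  have h1 := hX 1
  have h2 := hX (-1)
  rw [expand_last (by omega : 4 ≤ 2 * n) T hsymm] at h1 h2
  -- The terms `k = 0` and `k = 4` are the pure fourth powers of `f` and of `g`.
  have r0 : T (fun i => if (i : ℕ) < 2 * n - 4 then e else if (i : ℕ) < 2 * n - 0 then f else g) =
      T (fun i => if (i : ℕ) < 2 * n - 4 then e else f) := by
    congr 1; funext i; simp
  have r4 : T (fun i => if (i : ℕ) < 2 * n - 4 then e else if (i : ℕ) < 2 * n - 4 then f else g) =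
      T (fun i => if (i : ℕ) < 2 * n - 4 then e else g) := by
    congr 1; funext i; split_ifs <;> rfl
  simp only [Finset.sum_range_succ, Finset.sum_range_zero] at h1 h2
  rw [r0, r4, hF, hG, hf, hg] at h1 h2
  have k2 : Nat.choose 4 2 = 6 := rfl
  have k1 : Nat.choose 4 1 = 4 := rfl
  have k3 : Nat.choose 4 3 = 4 := rfl
  simp only [k1, k2, k3, Nat.choose_self, Nat.choose_zero_right] at h1 h2
  push_cast at h1 h2
  refine ⟨by rw [hF, hf]; ring, ?_⟩
  have hK : c / ((2 * n - 1) * (2 * n - 3)) = 3 * c / ((2 * n - 1) * (2 * n - 3)) / 3 := by ring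
  rw [hK]
  linear_combination (h1 + h2) / 12
end
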